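/- arXiv:2101.12621 — 2 statements merged into one kernel-verified Lean document; each statement's English description precedes it below -/
import Mathlib

section
/- Let P be a finite pure weighted graded poset of rank d with a standard weight scheme, in which every element of positive rank covers at least two elements, and suppose P possesses Property AL. For a self-adjoint operator M with eigenvalues λ_1 ≥ λ_2 ≥ … ≥ λ_n, write λ(M) = max{λ_2, |λ_n|}. If there exists λ ≥ 0 such that λ(A_x) ≤ λ for every x ∈ P of rank at most d−2, then for every 0 ≤ l ≤ d−1, in operator norm: ‖A_l − U_{l−1}D_l‖ ≤ λ. -/
open Finset

attribute [local instance] Classical.propDecidable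

noncomputable section

/-- A finite pure weighted graded poset of rank `d`, presented as a rank function
and a weight scheme on a finite partial order `P`. -/
structure WGP (P : Type) [Fintype P] [PartialOrder P] where
  /-- the rank of the poset -/
  d : ℤ
  /-- the rank function -/
  rk : P → ℤ
  rk_mono : Monotone rk
  rk_lb : ∀ x, -1 ≤ rk x
  rk_ub : ∀ x, rk x ≤ d
  rk_covBy : ∀ a b : P, a ⋖ b → rk b = rk a + 1
  bot_unique : ∃! x : P, rk x = -1
  isPure : ∀ x : P, ∃ y : P, rk y = d ∧ x ≤ y
  /-- the weight function -/
  m : P → ℝ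
  m_pos : ∀ x, 0 < m x
  /-- the transition probabilities: `p y x` is `p_{y → x}` -/
  p : P → P → ℝ
  p_nonneg : ∀ y x, 0 ≤ p y x
  p_pos_iff : ∀ y x, 0 < p y x ↔ x ⋖ y
  p_sum : ∀ y, 0 ≤ rk y → ∑ x ∈ univ.filter (fun x => x ⋖ y), p y x = 1
  m_eq : ∀ x, rk x < d → m x = ∑ y ∈ univ.filter (fun y => x ⋖ y), p y x * m y
  m_bot : ∀ x, rk x = -1 → m x = 1

/-- `T` has at most `n` eigenvalues greater than `c`, counted with
(geometric) multiplicity. -/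
def eigMultAboveLe {V : Type*} [AddCommGroup V] [Module ℝ V]
    (T : Module.End ℝ V) (c : ℝ) (n : ℕ) : Prop :=
  ∀ s : Finset ℝ, (∀ μ ∈ s, c < μ) →
    ∑ μ ∈ s, Module.finrank ℝ (T.eigenspace μ) ≤ n

/-- `μ` is the second largest eigenvalue of `T`, counted with multiplicity. -/
def IsSecondLargestEig {V : Type*} [AddCommGroup V] [Module ℝ V]
    (T : Module.End ℝ V) (μ : ℝ) : Prop :=
  T.HasEigenvalue μ ∧ eigMultAboveLe T μ 1 ∧
    ∃ s : Finset ℝ, (∀ ν ∈ s, μ ≤ ν) ∧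
      2 ≤ ∑ ν ∈ s, Module.finrank ℝ (T.eigenspace ν)

/-- `ν` is the least eigenvalue of `T`. -/
def IsLeastEig {V : Type*} [AddCommGroup V] [Module ℝ V]
    (T : Module.End ℝ V) (ν : ℝ) : Prop :=
  T.HasEigenvalue ν ∧ ∀ c : ℝ, T.HasEigenvalue c → ν ≤ c

/-- `λ(T) ≤ lam`, i.e. the second largest eigenvalue of `T` (with multiplicity)
is at most `lam` and the least eigenvalue is at least `-lam`. -/
def lamBd {V : Type*} [AddCommGroup V] [Module ℝ V]
    (T : Module.End ℝ V) (lam : ℝ) : Prop :=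
  eigMultAboveLe T lam 1 ∧ ∀ c : ℝ, T.HasEigenvalue c → -lam ≤ c

namespace WGP

variable {P : Type} [Fintype P] [PartialOrder P] (W : WGP P)

/-- The level set `P(i)`. -/
def lvl (i : ℤ) : Finset P := univ.filter (fun x => W.rk x = i)

/-- The weighted inner product on `C^i`. -/
def innerAt (i : ℤ) (f g : P → ℝ) : ℝ := ∑ x ∈ W.lvl i, W.m x * f x * g x

/-- The squared norm on `C^i`. -/
def normSqAt (i : ℤ) (f : P → ℝ) : ℝ := W.innerAt i f f

/-- The norm on `C^i`. -/
def normAt (i : ℤ) (f : P → ℝ) : ℝ := Real.sqrt (W.normSqAt i f)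

/-- The matrix of transition probabilities : entry `(y, x)` is `p_{y→x}`,
which vanishes unless `x ⋖ y`.  This is also the matrix of the up operator. -/
def upMat : Matrix P P ℝ := Matrix.of fun y x => W.p y x

/-- The matrix of the down operator. -/
def downMat : Matrix P P ℝ := Matrix.of fun x y => W.p y x * W.m y / W.m x

/-- The up operator `U`. -/
def Up (f : P → ℝ) : P → ℝ := W.upMat.mulVec f

/-- The down operator `D`. -/
def Down (f : P → ℝ) : P → ℝ := W.downMat.mulVec f

/-- `chSum x y = Σ_{c ∈ Ch(y→x)} p(c)`, the total `p`-weight of maximal chains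
from `x` up to `y` (the entry of the corresponding power of the transition
matrix). -/
def chSum (x y : P) : ℝ := (W.upMat ^ (W.rk y - W.rk x).toNat) y x

/-- The induced weight function of the link `P_x`. -/
def mL (x y : P) : ℝ := W.m y / W.m x * W.chSum x y

/-- The induced transition probabilities of the link `P_x` :
`pL x z y = (p_x)_{z → y}`. -/
def pL (x z y : P) : ℝ := W.p z y * W.chSum x y / W.chSum x z

/-- The level set `P_x(j)` of the link of `x`. -/
def linkLvl (x : P) (j : ℤ) : Finset P :=
  univ.filter (fun y => x ≤ y ∧ W.rk y = W.rk x + 1 + j)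

/-- The inner product of the link `P_x` at link-level `j`. -/
def innerL (x : P) (j : ℤ) (f g : P → ℝ) : ℝ :=
  ∑ y ∈ W.linkLvl x j, W.mL x y * f y * g y

/-- The matrix of the up operator of the link `P_x`. -/
def upMatL (x : P) : Matrix P P ℝ :=
  Matrix.of fun z y => if y ⋖ z ∧ x ≤ y then W.pL x z y else 0

/-- The matrix of the down operator of the link `P_x`. -/
def downMatL (x : P) : Matrix P P ℝ :=
  Matrix.of fun y z => if y ⋖ z then W.pL x z y * W.mL x z / W.mL x y else 0

/-- The up operator of the link `P_x`. -/
def UpL (x : P) (f : P → ℝ) : P → ℝ := (W.upMatL x).mulVec f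

/-- The down operator of the link `P_x`. -/
def DownL (x : P) (f : P → ℝ) : P → ℝ := (W.downMatL x).mulVec f

/-- The up-down walk `M^+_{x,0}` of the link `P_x`. -/
def MplusL (x : P) (f : P → ℝ) : P → ℝ := W.DownL x (W.UpL x f)

/-- The down-up walk `M^-_{x,0}` of the link `P_x`. -/
def MminusL (x : P) (f : P → ℝ) : P → ℝ := W.UpL x (W.DownL x f)

/-- The adjacency matrix. -/
def adjMat : Matrix P P ℝ := Matrix.of fun y x =>
  if x = y then 0 else
    ∑ z ∈ univ.filter (fun z => x ⋖ z ∧ y ⋖ z),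
      W.m z * W.p z x * W.p z y / ((1 - W.p z y) * W.m y)

/-- The adjacency operator. -/
def Adj (f : P → ℝ) : P → ℝ := W.adjMat.mulVec f

/-- The adjacency matrix of the link `P_x`. -/
def adjMatL (x : P) : Matrix P P ℝ := Matrix.of fun y w =>
  if w = y then 0 else
    ∑ z ∈ univ.filter (fun z => w ⋖ z ∧ y ⋖ z),
      W.mL x z * W.pL x z w * W.pL x z y / ((1 - W.pL x z y) * W.mL x y)

/-- The adjacency operator of the link `P_x`. -/
def AdjL (x : P) (f : P → ℝ) : P → ℝ := (W.adjMatL x).mulVec f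

/-- The up-down walk `M^+_l` as an endomorphism of `C^l`. -/
def MplusEnd (l : ℤ) : Module.End ℝ ({x : P // W.rk x = l} → ℝ) :=
  ((W.downMat * W.upMat).submatrix Subtype.val Subtype.val).mulVecLin

/-- The up-down walk `M^+_{x,0}` as an endomorphism of `C^0(P_x)`. -/
def MplusEndL (x : P) : Module.End ℝ ({y : P // x ⋖ y} → ℝ) :=
  ((W.downMatL x * W.upMatL x).submatrix Subtype.val Subtype.val).mulVecLin

/-- The adjacency operator `A_x` of the link `P_x` as an endomorphism of
`C^0(P_x)`. -/
def AdjEndL (x : P) : Module.End ℝ ({y : P // x ⋖ y} → ℝ) :=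
  ((W.adjMatL x).submatrix Subtype.val Subtype.val).mulVecLin

/-- A standard weight scheme. -/
def Standard : Prop :=
  ∀ y x : P, x ⋖ y → W.p y x = 1 / ((univ.filter (fun z => z ⋖ y)).card : ℝ)

/-- `P` is lower regular at level `i` with constant `N`. -/
def LowerRegAt (i : ℤ) (N : ℕ) : Prop :=
  ∀ y : P, W.rk y = i → (univ.filter (fun z => z ⋖ y)).card = N

/-- `P` is middle regular at level `i` with constant `N`. -/
def MiddleRegAt (i : ℤ) (N : ℕ) : Prop :=
  ∀ x z : P, W.rk x = i + 1 → W.rk z = i - 1 → z < x →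
    (univ.filter (fun y => z ⋖ y ∧ y ⋖ x)).card = N

/-- `P` is `∨∧`-regular at level `i` with constant `N`. -/
def WedgeRegAt (i : ℤ) (N : ℕ) : Prop :=
  ∀ y₁ y₂ : P, W.rk y₁ = i → W.rk y₂ = i → y₁ ≠ y₂ → (∃ z, y₁ ⋖ z ∧ y₂ ⋖ z) →
    (univ.filter (fun s => s ⋖ y₁ ∧ s ⋖ y₂)).card = N

/-- `P` is `⅄`-regular with constant `R`. -/
def WyeReg (R : ℕ) : Prop :=
  ∀ u y₁ y₂ : P, W.rk u = 2 → W.rk y₁ = 0 → W.rk y₂ = 0 → y₁ ≠ y₂ →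
    y₁ < u → y₂ < u →
    (univ.filter (fun z => y₁ ⋖ z ∧ y₂ ⋖ z ∧ z ⋖ u)).card = R

/-- Property UL.1 with constants `c`. -/
def UL1 (c : ℤ → ℝ) : Prop :=
  ∀ l : ℤ, 0 ≤ l → l < W.d → ∀ y : P, W.rk y = l → ∀ x : P, y ⋖ x →
    ∑ z ∈ univ.filter (fun z => z ⋖ y), W.p y z ^ 2 / W.chSum z x = c l

/-- Property UL.2 with constants `c`. -/
def UL2 (c : ℤ → ℝ) : Prop :=
  ∀ l : ℤ, 0 ≤ l → l < W.d → ∀ y₁ y₂ : P, W.rk y₁ = l → W.rk y₂ = l → y₁ ≠ y₂ →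
    ∀ x : P, y₁ ⋖ x → y₂ ⋖ x →
    ∑ z ∈ univ.filter (fun z => z ⋖ y₁ ∧ z ⋖ y₂),
      W.p y₁ z * W.p y₂ z / W.chSum z x = c l

/-- Property UL.3 with constants `c`. -/
def UL3 (c : ℤ → ℝ) : Prop :=
  ∀ l : ℤ, 0 ≤ l → l < W.d → ∀ y : P, W.rk y = l →
    ∑ x ∈ univ.filter (fun x => y ⋖ x), W.m x * W.p x y ^ 2 = c l * W.m y

/-- Property AL. -/
def AL : Prop :=
  ∀ l : ℤ, 0 ≤ l → l ≤ W.d - 1 → ∀ x y : P, W.rk x = l → W.rk y = l → x ≠ y →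
    ∑ z ∈ univ.filter (fun z => x ⋖ z ∧ y ⋖ z),
        W.m z * W.p z x * W.p z y / (1 - W.p z x)
    = ∑ z ∈ univ.filter (fun z => x ⋖ z ∧ y ⋖ z),
        W.m z * W.p z x * W.p z y *
          ∑ s ∈ univ.filter (fun s => s ⋖ x ∧ s ⋖ y),
            W.p x s * W.p y s / (W.chSum s z - W.p z x * W.p x s)

/-- Equation TL.1 with constant `c`. -/
def TL1 (c : ℝ) : Prop :=
  ∀ y : P, W.rk y = 0 →
    c * W.m y = ∑ z ∈ univ.filter (fun z => y ⋖ z), W.m z * W.p z y ^ 2 *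
      ∑ x ∈ univ.filter (fun x => x ⋖ z ∧ x ≠ y), W.p z x / (1 - W.p z x) ^ 2

/-- Equation TL.2 with constant `c`. -/
def TL2 (c : ℝ) : Prop :=
  ∀ y₁ y₂ : P, W.rk y₁ = 0 → W.rk y₂ = 0 → y₁ ≠ y₂ →
    c * ∑ z ∈ univ.filter (fun z => y₁ ⋖ z ∧ y₂ ⋖ z),
          W.m z * W.p z y₁ * W.p z y₂ / (1 - W.p z y₁)
    = ∑ z ∈ univ.filter (fun z => y₁ ⋖ z ∧ y₂ ⋖ z),
        W.m z * W.p z y₁ * W.p z y₂ *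
          ∑ x ∈ univ.filter (fun x => x ⋖ z ∧ x ≠ y₁ ∧ x ≠ y₂),
            W.p z x / (1 - W.p z x) ^ 2

/-- Equation TL.3 with constant `c`. -/
def TL3 (c : ℝ) : Prop :=
  ∀ y : P, W.rk y = 0 →
    c * W.m y =
      ∑ x ∈ univ.filter (fun x => W.rk x = 0 ∧ x ≠ y),
        ∑ z ∈ univ.filter (fun z => x ⋖ z ∧ y ⋖ z),
          ∑ w ∈ univ.filter (fun w => w ≠ z ∧ x ⋖ w ∧ y ⋖ w),
            ∑ u ∈ univ.filter (fun u => z ⋖ u ∧ w ⋖ u),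
              W.m u * W.p u z * W.p u w * W.p w y * W.p z y * W.p w x * W.p z x /
                (W.chSum x u * (1 - W.p u z * W.p z x / W.chSum x u) *
                  (1 - W.p w x) * (1 - W.p z x))

/-- Equation TL.4 with constant `c`. -/
def TL4 (c : ℝ) : Prop :=
  ∀ y₁ y₂ : P, W.rk y₁ = 0 → W.rk y₂ = 0 → y₁ ≠ y₂ →
    c * ∑ z ∈ univ.filter (fun z => y₁ ⋖ z ∧ y₂ ⋖ z),
          W.m z * W.p z y₁ * W.p z y₂ / (1 - W.p z y₁)
    = ∑ x ∈ univ.filter (fun x => W.rk x = 0 ∧ x ≠ y₁ ∧ x ≠ y₂),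
        ∑ z ∈ univ.filter (fun z => x ⋖ z ∧ y₂ ⋖ z),
          ∑ w ∈ univ.filter (fun w => w ≠ z ∧ x ⋖ w ∧ y₁ ⋖ w),
            ∑ u ∈ univ.filter (fun u => z ⋖ u ∧ w ⋖ u),
              W.m u * W.p u z * W.p u w * W.p w y₁ * W.p z y₂ * W.p w x * W.p z x /
                (W.chSum x u * (1 - W.p u z * W.p z x / W.chSum x u) *
                  (1 - W.p w x) * (1 - W.p z x))

/-- The induced function `f̂_x ∈ C^0(P_x)` of `f ∈ C^0`. -/
def hatF (x : P) (f : P → ℝ) : P → ℝ := fun z =>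
  (1 / (1 - W.p z x)) * ∑ y ∈ univ.filter (fun y => y ≠ x ∧ y ⋖ z), W.p z y * f y

/-- `P` is connected: the Markov chain `M^+_0` on `P(0)` is irreducible. -/
def Connected : Prop :=
  ∀ y z : P, W.rk y = 0 → W.rk z = 0 →
    ∃ j : ℕ, 0 < j ∧ ((W.downMat * W.upMat) ^ j) z y ≠ 0

/-- The link `P_x` is connected: the Markov chain `M^+_{x,0}` on `P_x(0)` is
irreducible. -/
def LinkConnected (x : P) : Prop :=
  ∀ y z : P, x ⋖ y → x ⋖ z →
    ∃ j : ℕ, 0 < j ∧ ((W.downMatL x * W.upMatL x) ^ j) z y ≠ 0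

/-- `c` is a nontrivial eigenvalue of the adjacency operator `A` of `P`,
i.e. one with an eigenvector orthogonal to the constants. -/
def IsNontrivEigAdj (c : ℝ) : Prop :=
  ∃ f : P → ℝ, (∃ y, W.rk y = 0 ∧ f y ≠ 0) ∧
    (∀ y, W.rk y = 0 → W.Adj f y = c * f y) ∧
    W.innerAt 0 f (fun _ => 1) = 0

/-- `c` is a nontrivial eigenvalue of the adjacency operator `A_x` of the
link `P_x`. -/
def IsNontrivEigAdjL (x : P) (c : ℝ) : Prop :=
  ∃ f : P → ℝ, (∃ y, x ⋖ y ∧ f y ≠ 0) ∧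
    (∀ y, x ⋖ y → W.AdjL x f y = c * f y) ∧
    W.innerL x 0 f (fun _ => 1) = 0

end WGP

/-!
Property AL says precisely that the adjacency operator at `y` is the average, with weights
`p_{y → s}`, of the adjacency operators of the links of the elements `s` covered by `y`. The
same average of the means `D f s` is `U D f`, so `A - U D` averages the operators
`A_s - (projection onto constants)`; Jensen's inequality then bounds its norm by their norms.

The spectral bound for `A_s` needs it to be a reversible Markov operator. A priori its row sums
are only at most one, but their average is the row sum of `A`, which is one, so all of them are
one. Likewise, for fixed `y` and `w` the flows of the walks `A_s` from `y` to `w` and back compare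
in the same direction for every `s` (the direction depends on which of `y` and `w` covers more
elements) and have equal totals, so they agree for each `s`.
-/

section Spectral

open Module.End

variable {V : Type*}

theorem eigMultAboveLe.not_linearIndependent [AddCommGroup V] [Module ℝ V]
    [FiniteDimensional ℝ V] {T : Module.End ℝ V} {c a b : ℝ} {u v : V}
    (hT : eigMultAboveLe T c 1) (hu : T.HasEigenvector a u) (hv : T.HasEigenvector b v)
    (ha : c < a) (hb : c < b) : ¬ LinearIndependent ℝ ![u, v] := by
  intro hlin
  have one_le_finrank {r : ℝ} {w : V} (hw : T.HasEigenvector r w) :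
      1 ≤ Module.finrank ℝ (T.eigenspace r) :=
    Submodule.one_le_finrank_iff.mpr (hasEigenvalue_of_hasEigenvector hw)
  rcases eq_or_ne a b with rfl | hab
  · have hspan : Submodule.span ℝ (Set.range ![u, v]) ≤ T.eigenspace a := by
      rw [Submodule.span_le, Set.range_subset_iff, Fin.forall_fin_two]
      exact ⟨hu.1, hv.1⟩
    have htwo := (finrank_span_eq_card hlin).symm.trans_le (Submodule.finrank_mono hspan)
    have hone := hT {a} (by simpa using ha)
    rw [sum_singleton] at hone
    rw [Fintype.card_fin] at htwo
    lia
  · have hone := hT {a, b} (by simp [ha, hb])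
    rw [sum_pair hab] at hone
    linarith [one_le_finrank hu, one_le_finrank hv]

variable [NormedAddCommGroup V] [InnerProductSpace ℝ V] [FiniteDimensional ℝ V]

theorem norm_apply_le_of_abs_eigenvalue_le {T : V →ₗ[ℝ] V} (hT : T.IsSymmetric) {lam : ℝ}
    (hlam : 0 ≤ lam) (hbd : ∀ c, HasEigenvalue T c → |c| ≤ lam) (v : V) :
    ‖T v‖ ≤ lam * ‖v‖ := by
  let b := hT.eigenvectorBasis rfl
  rw [← b.repr.norm_map, ← b.repr.norm_map v, ← Real.norm_of_nonneg hlam, ← norm_smul]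
  simp only [EuclideanSpace.norm_eq]
  gcongr with i
  rw [hT.eigenvectorBasis_apply_self_apply, PiLp.smul_apply, smul_eq_mul, norm_mul, norm_mul,
    Real.norm_of_nonneg hlam]
  exact mul_le_mul_of_nonneg_right (hbd _ (hT.hasEigenvalue_eigenvalues rfl i)) (norm_nonneg _)

theorem lamBd.norm_apply_le_of_inner_eq_zero {T : V →ₗ[ℝ] V} {lam : ℝ} (hbd : lamBd T lam)
    (hlam : 0 ≤ lam) (hT : T.IsSymmetric) (hle : ∀ c, HasEigenvalue T c → c ≤ 1) {e v : V}
    (he : e ≠ 0) (hTe : T e = e) (hv : inner ℝ e v = 0) : ‖T v‖ ≤ lam * ‖v‖ := by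
  have hinv : ∀ w ∈ (ℝ ∙ e)ᗮ, T w ∈ (ℝ ∙ e)ᗮ := by
    intro w hw
    rw [Submodule.mem_orthogonal_singleton_iff_inner_right] at hw ⊢
    rw [← hT, hTe, hw]
  have heig : ∀ c, HasEigenvalue (T.restrict hinv) c → |c| ≤ lam := by
    intro c hc
    obtain ⟨w, hw⟩ := hc.exists_hasEigenvector
    have hwT : HasEigenvector T c w :=
      ⟨mem_eigenspace_iff.mpr (congrArg Subtype.val hw.apply_eq_smul),
        fun h => hw.2 (Subtype.ext h)⟩
    have heT : HasEigenvector T 1 e := ⟨mem_eigenspace_iff.mpr (by rw [hTe, one_smul]), he⟩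
    have hcT := hasEigenvalue_of_hasEigenvector hwT
    have horth := Submodule.mem_orthogonal_singleton_iff_inner_right.mp w.2
    have horth' := Submodule.mem_orthogonal_singleton_iff_inner_left.mp w.2
    refine abs_le.mpr ⟨hbd.2 c hcT, ?_⟩
    by_contra! hlt
    refine hbd.1.not_linearIndependent heT hwT (hlt.trans_le (hle c hcT)) hlt ?_
    refine linearIndependent_of_ne_zero_of_inner_eq_zero (𝕜 := ℝ)
      (Fin.forall_fin_two.mpr ⟨he, hwT.2⟩) ?_
    intro i j hij
    fin_cases i <;> fin_cases j <;> simp_all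
  exact norm_apply_le_of_abs_eigenvalue_le (hT.restrict_invariant hinv) hlam heig
    ⟨v, Submodule.mem_orthogonal_singleton_iff_inner_right.mpr hv⟩

theorem lamBd.norm_sq_apply_sub_inner_smul_le {T : V →ₗ[ℝ] V} {lam : ℝ} (hbd : lamBd T lam)
    (hlam : 0 ≤ lam) (hT : T.IsSymmetric) (hle : ∀ c, HasEigenvalue T c → c ≤ 1) {e : V}
    (he : inner ℝ e e = 1) (hTe : T e = e) (v : V) :
    ‖T v - inner ℝ e v • e‖ ^ 2 ≤ lam ^ 2 * ‖v‖ ^ 2 := by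
  have he0 : e ≠ 0 := fun h => by simp [h] at he
  set w := v - inner ℝ e v • e with hw
  have horth : inner ℝ e w = 0 := by
    rw [hw, inner_sub_right, inner_smul_right, he, mul_one, sub_self]
  have hpyth : ‖v‖ ^ 2 = ‖w‖ ^ 2 + inner ℝ e v ^ 2 := by
    rw [hw, norm_sub_sq_real, inner_smul_right, real_inner_comm e v, norm_smul, mul_pow,
      ← real_inner_self_eq_norm_sq e, he, Real.norm_eq_abs, sq_abs]
    ring
  calc ‖T v - inner ℝ e v • e‖ ^ 2 = ‖T w‖ ^ 2 := by rw [hw, map_sub, map_smul, hTe]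
    _ ≤ (lam * ‖w‖) ^ 2 := by
      gcongr
      exact hbd.norm_apply_le_of_inner_eq_zero hlam hT hle he0 hTe horth
    _ ≤ lam ^ 2 * ‖v‖ ^ 2 := by
      rw [mul_pow, hpyth]
      gcongr
      exact le_add_of_nonneg_right (sq_nonneg _)

variable {Y : Type*} [Fintype Y] [DecidableEq Y] {A : Matrix Y Y ℝ}

theorem hasEigenvalue_le_one_of_mem_rowStochastic (hA : A ∈ Matrix.rowStochastic ℝ Y) {c : ℝ}
    (hc : HasEigenvalue A.mulVecLin c) : c ≤ 1 := by
  obtain ⟨k, hk⟩ := eigenvalue_mem_ball (A := A) hc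
  have hrow : A k k + ∑ j ∈ univ.erase k, ‖A k j‖ = 1 := by
    rw [← Matrix.sum_row_of_mem_rowStochastic hA k, ← add_sum_erase univ _ (mem_univ k)]
    simp only [Real.norm_of_nonneg (Matrix.nonneg_of_mem_rowStochastic hA)]
  rw [Metric.mem_closedBall, Real.dist_eq] at hk
  linarith [le_abs_self (c - A k k)]

theorem lamBd.sum_mul_mulVec_sub_dotProduct_sq_le {lam : ℝ} (hbd : lamBd A.mulVecLin lam)
    (hlam : 0 ≤ lam) (hA : A ∈ Matrix.rowStochastic ℝ Y) {μ : Y → ℝ} (hμ : ∀ y, 0 < μ y)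
    (hμ1 : ∑ y, μ y = 1) (hrev : ∀ y w, μ y * A y w = μ w * A w y) (f : Y → ℝ) :
    ∑ y, μ y * (A.mulVec f y - μ ⬝ᵥ f) ^ 2 ≤ lam ^ 2 * ∑ y, μ y * f y ^ 2 := by
  have hpos : (Matrix.diagonal μ).PosDef := Matrix.PosDef.diagonal hμ
  -- `Y → ℝ` also carries the sup norm, so every instance path to a norm has to be overridden.
  let weighted : NormedAddCommGroup (Y → ℝ) := (Matrix.diagonal μ).toNormedAddCommGroup hpos
  let _ : SeminormedAddCommGroup (Y → ℝ) := weighted.toSeminormedAddCommGroup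
  let _ : Norm (Y → ℝ) := weighted.toNorm
  let _ : InnerProductSpace ℝ (Y → ℝ) := (Matrix.diagonal μ).toInnerProductSpace hpos.posSemidef
  have inner_eq (g h : Y → ℝ) : inner ℝ g h = ∑ y, μ y * h y * g y := by
    change (Matrix.diagonal μ).mulVec h ⬝ᵥ star g = _
    simp only [dotProduct, Matrix.mulVec_diagonal, star_trivial]
  have norm_sq_eq (g : Y → ℝ) : ‖g‖ ^ 2 = ∑ y, μ y * g y ^ 2 := by
    rw [← real_inner_self_eq_norm_sq, inner_eq]
    simp only [pow_two, mul_assoc]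
  have hsymm : A.mulVecLin.IsSymmetric := by
    intro g h
    simp only [inner_eq, Matrix.mulVecLin_apply, Matrix.mulVec, dotProduct, mul_sum, sum_mul]
    rw [sum_comm]
    refine sum_congr rfl fun y _ => sum_congr rfl fun w _ => ?_
    linear_combination (g y * h w) * hrev w y
  have hone : inner ℝ (1 : Y → ℝ) 1 = 1 := by
    rw [inner_eq]
    simpa using hμ1
  have hmean : inner ℝ 1 f = μ ⬝ᵥ f := by simp [inner_eq, dotProduct]
  have hbound := hbd.norm_sq_apply_sub_inner_smul_le hlam hsymm
    (fun _ => hasEigenvalue_le_one_of_mem_rowStochastic hA) hone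
    (Matrix.one_vecMul_of_mem_rowStochastic hA) f
  rw [norm_sq_eq, norm_sq_eq, hmean] at hbound
  simpa using hbound

end Spectral

namespace WGP

variable {P : Type} [Fintype P] [PartialOrder P] {W : WGP P} {s w x y z : P}

theorem p_pos (h : x ⋖ y) : 0 < W.p y x :=
  (W.p_pos_iff y x).mpr h

theorem covBy_of_p_ne_zero (h : W.p y x ≠ 0) : x ⋖ y :=
  (W.p_pos_iff y x).mp ((W.p_nonneg y x).lt_of_ne' h)

theorem p_eq_zero (h : ¬ x ⋖ y) : W.p y x = 0 :=
  not_imp_comm.mp covBy_of_p_ne_zero h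

theorem sum_p (hy : 0 ≤ W.rk y) : ∑ x, W.p y x = 1 := by
  rw [← W.p_sum y hy, sum_filter_of_ne fun _ _ => covBy_of_p_ne_zero]

theorem sum_m_mul_p (hx : W.rk x < W.d) : ∑ y, W.m y * W.p y x = W.m x := by
  simp only [mul_comm (W.m _)]
  rw [W.m_eq x hx, sum_filter_of_ne fun _ _ h => covBy_of_p_ne_zero (left_ne_zero_of_mul h)]

theorem m_mul_downMat (x y : P) : W.m x * W.downMat x y = W.m y * W.p y x := by
  rw [downMat, Matrix.of_apply, mul_div_cancel₀ _ (W.m_pos x).ne', mul_comm]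

theorem m_mul_down (f : P → ℝ) (x : P) :
    W.m x * W.Down f x = ∑ y, W.m y * W.p y x * f y := by
  simp only [Down, Matrix.mulVec, dotProduct, mul_sum, ← mul_assoc, m_mul_downMat]

theorem sum_downMat (hx : W.rk x < W.d) : ∑ y, W.downMat x y = 1 := by
  apply mul_left_cancel₀ (W.m_pos x).ne'
  simp only [mul_sum, m_mul_downMat, sum_m_mul_p hx, mul_one]

theorem downMat_pos (h : x ⋖ y) : 0 < W.downMat x y :=
  div_pos (mul_pos (p_pos h) (W.m_pos y)) (W.m_pos x)

theorem covBy_of_downMat_ne_zero (h : W.downMat x y ≠ 0) : x ⋖ y :=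
  covBy_of_p_ne_zero (left_ne_zero_of_mul (left_ne_zero_of_mul h))

theorem rk_eq_add_two (W : WGP P) (hsy : s ⋖ y) (hyz : y ⋖ z) : W.rk z = W.rk s + 2 := by
  rw [W.rk_covBy _ _ hyz, W.rk_covBy _ _ hsy, add_assoc, one_add_one_eq_two]

theorem chSum_of_rk_eq_add_one (h : W.rk y = W.rk s + 1) : W.chSum s y = W.p y s := by
  simp [chSum, h, upMat]

theorem chSum_of_rk_eq_add_two (h : W.rk z = W.rk s + 2) :
    W.chSum s z = ∑ y, W.p z y * W.p y s := by
  simp [chSum, h, upMat, pow_two, Matrix.mul_apply]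

theorem chSum_pos (hsy : s ⋖ y) (hyz : y ⋖ z) : 0 < W.chSum s z := by
  rw [chSum_of_rk_eq_add_two (W.rk_eq_add_two hsy hyz)]
  exact sum_pos' (fun _ _ => mul_nonneg (W.p_nonneg _ _) (W.p_nonneg _ _))
    ⟨y, mem_univ y, mul_pos (p_pos hyz) (p_pos hsy)⟩

variable (W) in
/-- The total weight `∑ p(c)` of the chains `c ≠ (s, y, z)` of length two from `s` up to `z`.
These are the denominators of Property AL. -/
def chSumAvoiding (s y z : P) : ℝ := ∑ w ∈ univ.erase y, W.p z w * W.p w s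

theorem chSumAvoiding_nonneg (s y z : P) : 0 ≤ W.chSumAvoiding s y z :=
  sum_nonneg fun _ _ => mul_nonneg (W.p_nonneg _ _) (W.p_nonneg _ _)

theorem chSumAvoiding_pos (hwy : w ≠ y) (hsw : s ⋖ w) (hwz : w ⋖ z) :
    0 < W.chSumAvoiding s y z :=
  sum_pos' (fun _ _ => mul_nonneg (W.p_nonneg _ _) (W.p_nonneg _ _))
    ⟨w, mem_erase.mpr ⟨hwy, mem_univ w⟩, mul_pos (p_pos hwz) (p_pos hsw)⟩

theorem chSum_sub_eq_chSumAvoiding (h : W.rk z = W.rk s + 2) (y : P) :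
    W.chSum s z - W.p z y * W.p y s = W.chSumAvoiding s y z := by
  rw [chSum_of_rk_eq_add_two h, chSumAvoiding, sum_erase_eq_sub (mem_univ y)]

theorem sum_filter_covers_both (y w : P) {g : P → ℝ}
    (hg : ∀ z, W.p z y = 0 ∨ W.p z w = 0 → g z = 0) :
    ∑ z with y ⋖ z ∧ w ⋖ z, g z = ∑ z, g z :=
  sum_filter_of_ne fun z _ hz =>
    ⟨covBy_of_p_ne_zero fun h => hz (hg z (.inl h)), covBy_of_p_ne_zero fun h => hz (hg z (.inr h))⟩

theorem sum_filter_covered_by_both (y w : P) {g : P → ℝ}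
    (hg : ∀ s, W.p y s = 0 ∨ W.p w s = 0 → g s = 0) :
    ∑ s with s ⋖ y ∧ s ⋖ w, g s = ∑ s, g s :=
  sum_filter_of_ne fun s _ hs =>
    ⟨covBy_of_p_ne_zero fun h => hs (hg s (.inl h)), covBy_of_p_ne_zero fun h => hs (hg s (.inr h))⟩

theorem AL.sum_div_one_sub_p (hAL : W.AL) (hy0 : 0 ≤ W.rk y) (hyd : W.rk y < W.d) (hyw : y ≠ w) :
    ∑ z, W.m z * W.p z y * W.p z w / (1 - W.p z y) =
      ∑ z, W.m z * W.p z y * W.p z w * ∑ s, W.p y s * W.p w s / W.chSumAvoiding s y z := by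
  rw [← sum_filter_covers_both (W := W) y w (by rintro z (h | h) <;> simp [h]),
    ← sum_filter_covers_both (W := W) y w (by rintro z (h | h) <;> simp [h])]
  by_cases hrk : W.rk w = W.rk y
  · refine (hAL _ hy0 (by lia) y w rfl hrk hyw).trans (sum_congr rfl fun z hz => ?_)
    have hyz := (mem_filter.mp hz).2.1
    rw [← sum_filter_covered_by_both (W := W) y w (by rintro s (h | h) <;> simp [h])]
    congr 1
    refine sum_congr rfl fun s hs => ?_
    rw [chSum_sub_eq_chSumAvoiding (W.rk_eq_add_two (mem_filter.mp hs).2.1 hyz)]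
  · have hempty : univ.filter (fun z => y ⋖ z ∧ w ⋖ z) = ∅ :=
      filter_eq_empty_iff.mpr fun z _ ⟨hyz, hwz⟩ =>
        hrk (by linarith [W.rk_covBy _ _ hyz, W.rk_covBy _ _ hwz])
    simp only [hempty, sum_empty]

theorem m_mul_adjMat (hwy : w ≠ y) :
    W.m y * W.adjMat y w = ∑ z, W.m z * W.p z y * W.p z w / (1 - W.p z y) := by
  rw [adjMat, Matrix.of_apply, if_neg hwy, mul_sum,
    ← sum_filter_covers_both (W := W) w y (by rintro z (h | h) <;> simp [h])]
  refine sum_congr rfl fun z _ => ?_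
  have := (W.m_pos y).ne'
  field_simp

theorem one_sub_pL (hsy : s ⋖ y) (hyz : y ⋖ z) :
    1 - W.pL s z y = W.chSumAvoiding s y z / W.chSum s z := by
  rw [← chSum_sub_eq_chSumAvoiding (W.rk_eq_add_two hsy hyz), pL,
    chSum_of_rk_eq_add_one (W.rk_covBy _ _ hsy), sub_div, div_self (chSum_pos hsy hyz).ne']

theorem m_mul_adjMatL (hsy : s ⋖ y) (hwy : w ≠ y) :
    W.m y * W.adjMatL s y w =
      ∑ z, W.m z * W.p z y * (W.p z w * W.p w s / W.chSumAvoiding s y z) := by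
  rw [adjMatL, Matrix.of_apply, if_neg hwy, mul_sum,
    ← sum_filter_covers_both (W := W) w y (by rintro z (h | h) <;> simp [h])]
  refine sum_congr rfl fun z hz => ?_
  obtain ⟨hwz, hyz⟩ := (mem_filter.mp hz).2
  have hrky := W.rk_covBy _ _ hsy
  have hrkw : W.rk w = W.rk s + 1 := by
    linarith [W.rk_covBy _ _ hwz, W.rk_covBy _ _ hyz]
  have hy := W.m_pos y
  have hs := W.m_pos s
  have hpy := p_pos (W := W) hsy
  have hQ := chSum_pos (W := W) hsy hyz
  rw [one_sub_pL hsy hyz, mL, mL, pL, pL, chSum_of_rk_eq_add_one hrky, chSum_of_rk_eq_add_one hrkw]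
  field_simp

theorem adjMatL_nonneg (hsy : s ⋖ y) : 0 ≤ W.adjMatL s y w := by
  by_cases hwy : w = y
  · simp [adjMatL, hwy]
  · refine nonneg_of_mul_nonneg_right ?_ (W.m_pos y)
    rw [m_mul_adjMatL hsy hwy]
    exact sum_nonneg fun z _ => mul_nonneg (mul_nonneg (W.m_pos z).le (W.p_nonneg z y))
      (div_nonneg (mul_nonneg (W.p_nonneg z w) (W.p_nonneg w s)) (chSumAvoiding_nonneg s y z))

theorem covBy_of_adjMatL_ne_zero (hsy : s ⋖ y) (h : W.adjMatL s y w ≠ 0) : s ⋖ w := by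
  by_contra hsw
  have hp : W.p w s = 0 := p_eq_zero hsw
  have hwy : w ≠ y := fun h => hsw (h ▸ hsy)
  have hzero := m_mul_adjMatL (W := W) hsy hwy
  simp [hp, h, (W.m_pos y).ne'] at hzero

theorem m_mul_p_mul_adjMatL (s : P) (hwy : w ≠ y) :
    W.m y * (W.p y s * W.adjMatL s y w) =
      ∑ z, W.m z * W.p z y * W.p z w * (W.p y s * W.p w s / W.chSumAvoiding s y z) := by
  by_cases hsy : s ⋖ y
  · rw [mul_left_comm, m_mul_adjMatL hsy hwy, mul_sum]
    exact sum_congr rfl fun z _ => by ring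
  · simp [p_eq_zero hsy]

theorem AL.sum_p_mul_adjMatL (hAL : W.AL) (hy0 : 0 ≤ W.rk y) (hyd : W.rk y < W.d) (w : P) :
    ∑ s, W.p y s * W.adjMatL s y w = W.adjMat y w := by
  by_cases hwy : w = y
  · simp [adjMat, adjMatL, hwy]
  · apply mul_left_cancel₀ (W.m_pos y).ne'
    simp only [mul_sum, m_mul_p_mul_adjMatL _ hwy]
    rw [m_mul_adjMat hwy, hAL.sum_div_one_sub_p hy0 hyd (Ne.symm hwy), sum_comm]
    simp only [mul_sum]

theorem sum_adjMat (hyd : W.rk y < W.d) (hp : ∀ z, W.p z y ≠ 1) : ∑ w, W.adjMat y w = 1 := by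
  apply mul_left_cancel₀ (W.m_pos y).ne'
  have hdiag : W.adjMat y y = 0 := by simp [adjMat]
  calc W.m y * ∑ w, W.adjMat y w
      = ∑ w ∈ univ.erase y, ∑ z, W.m z * W.p z y * W.p z w / (1 - W.p z y) := by
        rw [← sum_erase univ hdiag, mul_sum]
        exact sum_congr rfl fun w hw => m_mul_adjMat (ne_of_mem_erase hw)
    _ = ∑ z, W.m z * W.p z y := by
        rw [sum_comm]
        refine sum_congr rfl fun z _ => ?_
        by_cases hyz : y ⋖ z
        · have hz : 0 ≤ W.rk z := by have := W.rk_covBy _ _ hyz; have := W.rk_lb y; lia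
          rw [← sum_div, ← mul_sum, sum_erase_eq_sub (mem_univ y), sum_p hz,
            mul_div_cancel_right₀ _ (sub_ne_zero.mpr (hp z).symm)]
        · simp [p_eq_zero hyz]
    _ = W.m y * 1 := by rw [sum_m_mul_p hyd, mul_one]

theorem sum_adjMatL_le_one (hsy : s ⋖ y) (hyd : W.rk y < W.d) : ∑ w, W.adjMatL s y w ≤ 1 := by
  refine le_of_mul_le_mul_left ?_ (W.m_pos y)
  have hdiag : W.adjMatL s y y = 0 := by simp [adjMatL]
  calc W.m y * ∑ w, W.adjMatL s y w
      = ∑ w ∈ univ.erase y,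
          ∑ z, W.m z * W.p z y * (W.p z w * W.p w s / W.chSumAvoiding s y z) := by
        rw [← sum_erase univ hdiag, mul_sum]
        exact sum_congr rfl fun w hw => m_mul_adjMatL hsy (ne_of_mem_erase hw)
    _ = ∑ z, W.m z * W.p z y * (W.chSumAvoiding s y z / W.chSumAvoiding s y z) := by
        rw [sum_comm]
        exact sum_congr rfl fun z _ => by rw [← mul_sum, ← sum_div, ← chSumAvoiding]
    _ ≤ ∑ z, W.m z * W.p z y := sum_le_sum fun z _ =>
        mul_le_of_le_one_right (mul_nonneg (W.m_pos z).le (W.p_nonneg z y)) (div_self_le_one _)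
    _ = W.m y * 1 := by rw [sum_m_mul_p hyd, mul_one]

theorem AL.sum_adjMatL (hAL : W.AL) (hy0 : 0 ≤ W.rk y) (hyd : W.rk y < W.d)
    (hp : ∀ z, W.p z y ≠ 1) (hsy : s ⋖ y) : ∑ w, W.adjMatL s y w = 1 := by
  have hle : ∀ s ∈ univ, W.p y s * ∑ w, W.adjMatL s y w ≤ W.p y s := by
    intro s _
    by_cases hsy : s ⋖ y
    · exact mul_le_of_le_one_right (W.p_nonneg y s) (sum_adjMatL_le_one hsy hyd)
    · simp [p_eq_zero hsy]
  have haverage : ∑ s, W.p y s * ∑ w, W.adjMatL s y w = ∑ s, W.p y s := by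
    simp only [mul_sum]
    rw [sum_comm, sum_p hy0, ← sum_adjMat hyd hp]
    exact sum_congr rfl fun w _ => hAL.sum_p_mul_adjMatL hy0 hyd w
  have heq := (sum_eq_sum_iff_of_le hle).mp haverage s (mem_univ s)
  exact (mul_eq_left₀ (p_pos hsy).ne').mp heq

theorem Standard.p_eq_p (hstd : W.Standard) (hxz : x ⋖ z) (hyz : y ⋖ z) :
    W.p z x = W.p z y := by
  rw [hstd z x hxz, hstd z y hyz]

theorem Standard.p_ne_one (hstd : W.Standard) (hcov : ∀ z, 1 ≤ W.rk z → 2 ≤ #{x | x ⋖ z})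
    (hy : 0 ≤ W.rk y) (z : P) : W.p z y ≠ 1 := by
  by_cases hyz : y ⋖ z
  · have hcard : 2 ≤ #{x | x ⋖ z} := hcov z (by linarith [W.rk_covBy _ _ hyz])
    rw [hstd z y hyz]
    exact ((div_lt_one (by positivity)).mpr (by exact_mod_cast hcard)).ne
  · simp [p_eq_zero hyz]

theorem Standard.p_le_p (hstd : W.Standard) (hsy : s ⋖ y) (hsw : s ⋖ w)
    (hcard : #{x | x ⋖ w} ≤ #{x | x ⋖ y}) :
    W.p y s ≤ W.p w s := by
  rw [hstd y s hsy, hstd w s hsw]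
  have hpos : 0 < #{x | x ⋖ w} :=
    card_pos.mpr ⟨s, mem_filter.mpr ⟨mem_univ s, hsw⟩⟩
  gcongr

theorem Standard.m_mul_adjMat_comm (hstd : W.Standard) (y w : P) :
    W.m y * W.adjMat y w = W.m w * W.adjMat w y := by
  by_cases hwy : w = y
  · rw [hwy]
  rw [m_mul_adjMat hwy, m_mul_adjMat (Ne.symm hwy)]
  refine sum_congr rfl fun z _ => ?_
  by_cases h : y ⋖ z ∧ w ⋖ z
  · rw [hstd.p_eq_p h.1 h.2]
  · rcases not_and_or.mp h with h | h <;> simp [p_eq_zero h]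

theorem Standard.chSumAvoiding_le (hstd : W.Standard) (hsy : s ⋖ y) (hyz : y ⋖ z) (hwz : w ⋖ z)
    (hle : W.p y s ≤ W.p w s) :
    W.chSumAvoiding s w z ≤ W.chSumAvoiding s y z := by
  have hrk := W.rk_eq_add_two hsy hyz
  rw [← chSum_sub_eq_chSumAvoiding hrk, ← chSum_sub_eq_chSumAvoiding hrk, hstd.p_eq_p hyz hwz]
  gcongr
  exact W.p_nonneg z w

theorem Standard.m_mul_p_mul_adjMatL_le (hstd : W.Standard) (hwy : w ≠ y)
    (hcard : #{x | x ⋖ w} ≤ #{x | x ⋖ y}) (s : P) :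
    W.m y * (W.p y s * W.adjMatL s y w) ≤ W.m w * (W.p w s * W.adjMatL s w y) := by
  rw [m_mul_p_mul_adjMatL s hwy, m_mul_p_mul_adjMatL s hwy.symm]
  simp only [mul_right_comm (W.m _) (W.p _ w), mul_comm (W.p w s)]
  refine sum_le_sum fun z _ => ?_
  by_cases hz : y ⋖ z ∧ w ⋖ z
  · by_cases hs : s ⋖ y ∧ s ⋖ w
    · have hm := W.m_pos z
      have hpos := chSumAvoiding_pos (W := W) hwy.symm hs.1 hz.1
      have hmono := hstd.chSumAvoiding_le hs.1 hz.1 hz.2 (hstd.p_le_p hs.1 hs.2 hcard)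
      exact mul_le_mul_of_nonneg_left
        (div_le_div_of_nonneg_left (mul_nonneg (W.p_nonneg y s) (W.p_nonneg w s)) hpos hmono)
        (mul_nonneg (mul_nonneg hm.le (W.p_nonneg z y)) (W.p_nonneg z w))
    · rcases not_and_or.mp hs with h | h <;> simp [p_eq_zero h]
  · rcases not_and_or.mp hz with h | h <;> simp [p_eq_zero h]

theorem Standard.m_mul_p_mul_adjMatL_comm (hstd : W.Standard) (hAL : W.AL) (hy0 : 0 ≤ W.rk y)
    (hyd : W.rk y < W.d) (hwy : W.rk w = W.rk y) (s : P) :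
    W.m y * (W.p y s * W.adjMatL s y w) = W.m w * (W.p w s * W.adjMatL s w y) := by
  by_cases hne : w = y
  · rw [hne]
  have hsum : ∑ s, W.m y * (W.p y s * W.adjMatL s y w) =
      ∑ s, W.m w * (W.p w s * W.adjMatL s w y) := by
    rw [← mul_sum, ← mul_sum, hAL.sum_p_mul_adjMatL hy0 hyd,
      hAL.sum_p_mul_adjMatL (by rwa [hwy]) (by rwa [hwy]), hstd.m_mul_adjMat_comm]
  rcases le_total #{x | x ⋖ w} #{x | x ⋖ y} with hcard | hcard
  · exact (sum_eq_sum_iff_of_le fun s _ => hstd.m_mul_p_mul_adjMatL_le hne hcard s).mp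
      hsum s (mem_univ s)
  · exact ((sum_eq_sum_iff_of_le fun s _ => hstd.m_mul_p_mul_adjMatL_le (Ne.symm hne) hcard s).mp
      hsum.symm s (mem_univ s)).symm

theorem sum_subtype_covBy {g : P → ℝ} (hg : ∀ y, g y ≠ 0 → s ⋖ y) :
    ∑ y : {y // s ⋖ y}, g y = ∑ y, g y := by
  rw [← sum_filter_of_ne fun y _ => hg y]
  exact (sum_subtype _ (by simp) g).symm

theorem adjMatL_submatrix_mem_rowStochastic (h : ∀ y, s ⋖ y → ∑ w, W.adjMatL s y w = 1) :
    (W.adjMatL s).submatrix Subtype.val Subtype.val ∈ Matrix.rowStochastic ℝ {y // s ⋖ y} := by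
  refine Matrix.mem_rowStochastic_iff_sum.mpr ⟨fun y w => adjMatL_nonneg y.2, fun y => ?_⟩
  rw [← h y y.2]
  exact sum_subtype_covBy (g := W.adjMatL s y) fun w => covBy_of_adjMatL_ne_zero y.2

theorem Standard.down_adjL_sub_down_sq_le (hstd : W.Standard) (hAL : W.AL)
    (hcov : ∀ y, 1 ≤ W.rk y → 2 ≤ #{z | z ⋖ y}) {lam : ℝ} (hlam : 0 ≤ lam)
    (hsd : W.rk s ≤ W.d - 2) (hbd : lamBd (W.AdjEndL s) lam) (f : P → ℝ) :
    W.Down (fun y => (W.AdjL s f y - W.Down f s) ^ 2) s ≤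
      lam ^ 2 * W.Down (fun y => f y ^ 2) s := by
  have rk_mem {y : P} (hsy : s ⋖ y) : 0 ≤ W.rk y ∧ W.rk y < W.d := by
    have := W.rk_covBy _ _ hsy
    have := W.rk_lb s
    lia
  have hrow (y : P) (hsy : s ⋖ y) : ∑ w, W.adjMatL s y w = 1 :=
    hAL.sum_adjMatL (rk_mem hsy).1 (rk_mem hsy).2 (hstd.p_ne_one hcov (rk_mem hsy).1) hsy
  have hrev (y w : {y // s ⋖ y}) :
      W.downMat s y * W.adjMatL s y w = W.downMat s w * W.adjMatL s w y := by
    apply mul_left_cancel₀ (W.m_pos s).ne'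
    rw [← mul_assoc, ← mul_assoc, m_mul_downMat, m_mul_downMat, mul_assoc, mul_assoc]
    refine hstd.m_mul_p_mul_adjMatL_comm hAL (rk_mem y.2).1 (rk_mem y.2).2 ?_ s
    rw [W.rk_covBy _ _ y.2, W.rk_covBy _ _ w.2]
  have sum_downMat_mul (g : P → ℝ) :
      ∑ y : {y // s ⋖ y}, W.downMat s y * g y = W.Down g s :=
    sum_subtype_covBy fun y h => covBy_of_downMat_ne_zero (left_ne_zero_of_mul h)
  have hmass : ∑ y : {y // s ⋖ y}, W.downMat s y = 1 := by
    rw [sum_subtype_covBy fun y => covBy_of_downMat_ne_zero, sum_downMat (by lia)]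
  have hadj (y : {y // s ⋖ y}) :
      ((W.adjMatL s).submatrix Subtype.val Subtype.val).mulVec (fun w => f w.val) y =
        W.AdjL s f y :=
    sum_subtype_covBy (g := fun w => W.adjMatL s y w * f w) fun w h =>
      covBy_of_adjMatL_ne_zero y.2 (left_ne_zero_of_mul h)
  have hmean : (fun y : {y // s ⋖ y} => W.downMat s y) ⬝ᵥ (fun y => f y) = W.Down f s :=
    sum_downMat_mul f
  have hbound := hbd.sum_mul_mulVec_sub_dotProduct_sq_le hlam
    (adjMatL_submatrix_mem_rowStochastic hrow) (fun y => downMat_pos y.2) hmass hrev (fun y => f y)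
  simp only [hadj, hmean] at hbound
  rwa [sum_downMat_mul fun y => (W.AdjL s f y - W.Down f s) ^ 2,
    sum_downMat_mul fun y => f y ^ 2] at hbound

theorem sum_lvl_m_mul_sum_p_mul (l : ℤ) (g : P → P → ℝ) :
    ∑ y ∈ W.lvl l, W.m y * ∑ s, W.p y s * g s y =
      ∑ s ∈ W.lvl (l - 1), W.m s * W.Down (g s) s := by
  simp only [m_mul_down, lvl, sum_filter, mul_sum, ite_sum_zero]
  rw [sum_comm]
  refine sum_congr rfl fun s _ => sum_congr rfl fun y _ => ?_
  by_cases hsy : s ⋖ y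
  · have hrk : W.rk y = l ↔ W.rk s = l - 1 := by rw [W.rk_covBy _ _ hsy]; lia
    simp only [hrk, mul_assoc]
  · simp [p_eq_zero hsy]

theorem AL.adj_sub_up_down_apply (hAL : W.AL) (hy0 : 0 ≤ W.rk y) (hyd : W.rk y < W.d)
    (f : P → ℝ) :
    W.Adj f y - W.Up (W.Down f) y = ∑ s, W.p y s * (W.AdjL s f y - W.Down f s) := by
  have hadj : W.Adj f y = ∑ s, W.p y s * W.AdjL s f y := by
    simp only [Adj, AdjL, Matrix.mulVec, dotProduct, ← hAL.sum_p_mul_adjMatL hy0 hyd, sum_mul,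
      mul_sum, mul_assoc]
    exact sum_comm
  simp only [hadj, mul_sub, sum_sub_distrib]
  rfl

theorem sum_p_mul_sq_le (hy : 0 ≤ W.rk y) (h : P → ℝ) :
    (∑ s, W.p y s * h s) ^ 2 ≤ ∑ s, W.p y s * h s ^ 2 := by
  simpa using (even_two.convexOn_pow (𝕜 := ℝ)).map_sum_le (t := univ) (w := W.p y) (p := h)
    (fun s _ => W.p_nonneg y s) (sum_p hy) (fun _ _ => Set.mem_univ _)

theorem normSqAt_eq_sum_m_mul_sq (l : ℤ) (f : P → ℝ) :
    W.normSqAt l f = ∑ y ∈ W.lvl l, W.m y * f y ^ 2 := by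
  simp only [normSqAt, innerAt, pow_two, mul_assoc]

theorem sum_lvl_m_mul_down_sq {l : ℤ} (hl0 : 0 ≤ l) (f : P → ℝ) :
    ∑ s ∈ W.lvl (l - 1), W.m s * W.Down (fun y => f y ^ 2) s = W.normSqAt l f := by
  rw [← sum_lvl_m_mul_sum_p_mul l fun _ y => f y ^ 2, normSqAt_eq_sum_m_mul_sq]
  refine sum_congr rfl fun y hy => ?_
  rw [← sum_mul, sum_p (hl0.trans_eq (mem_filter.mp hy).2.symm), one_mul]

theorem Standard.normSqAt_adj_sub_up_down_le (hstd : W.Standard) (hAL : W.AL)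
    (hcov : ∀ y, 1 ≤ W.rk y → 2 ≤ #{z | z ⋖ y}) {lam : ℝ} (hlam : 0 ≤ lam) {l : ℤ}
    (hl0 : 0 ≤ l) (hld : l ≤ W.d - 1) (hbd : ∀ s, W.rk s = l - 1 → lamBd (W.AdjEndL s) lam)
    (f : P → ℝ) :
    W.normSqAt l (fun y => W.Adj f y - W.Up (W.Down f) y) ≤ lam ^ 2 * W.normSqAt l f := by
  have rk_eq {i : ℤ} {x : P} (hx : x ∈ W.lvl i) : W.rk x = i := (mem_filter.mp hx).2
  rw [normSqAt_eq_sum_m_mul_sq]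
  calc ∑ y ∈ W.lvl l, W.m y * (W.Adj f y - W.Up (W.Down f) y) ^ 2
      ≤ ∑ y ∈ W.lvl l, W.m y * ∑ s, W.p y s * (W.AdjL s f y - W.Down f s) ^ 2 := by
        refine sum_le_sum fun y hy => mul_le_mul_of_nonneg_left ?_ (W.m_pos y).le
        have hrk := rk_eq hy
        rw [hAL.adj_sub_up_down_apply (by lia) (by lia)]
        exact sum_p_mul_sq_le (by lia) _
    _ = ∑ s ∈ W.lvl (l - 1), W.m s * W.Down (fun y => (W.AdjL s f y - W.Down f s) ^ 2) s :=
        sum_lvl_m_mul_sum_p_mul l fun s y => (W.AdjL s f y - W.Down f s) ^ 2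
    _ ≤ ∑ s ∈ W.lvl (l - 1), W.m s * (lam ^ 2 * W.Down (fun y => f y ^ 2) s) := by
        refine sum_le_sum fun s hs => mul_le_mul_of_nonneg_left ?_ (W.m_pos s).le
        have hrk := rk_eq hs
        exact hstd.down_adjL_sub_down_sq_le hAL hcov hlam (by lia) (hbd s hrk) f
    _ = lam ^ 2 * W.normSqAt l f := by
        simp only [mul_left_comm (W.m _)]
        rw [← mul_sum, sum_lvl_m_mul_down_sq hl0]

end WGP

/-- two-sided local spectral expansion implies the eposet
condition `‖A_l − U_{l-1} D_l‖ ≤ λ`, under Property AL. -/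
theorem stmt12 {P : Type} [Fintype P] [PartialOrder P] (W : WGP P)
    (hstd : W.Standard)
    (hcov : ∀ y : P, 1 ≤ W.rk y → 2 ≤ (Finset.univ.filter (fun z => z ⋖ y)).card)
    (hAL : W.AL)
    (lam : ℝ) (hlam : 0 ≤ lam)
    (hbd : ∀ x : P, W.rk x ≤ W.d - 2 → lamBd (W.AdjEndL x) lam)
    (l : ℤ) (hl0 : 0 ≤ l) (hld : l ≤ W.d - 1) (f : P → ℝ) :
    W.normAt l (fun y => W.Adj f y - W.Up (W.Down f) y) ≤ lam * W.normAt l f := by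
  have hlink (s : P) (hs : W.rk s = l - 1) : lamBd (W.AdjEndL s) lam := hbd s (by lia)
  have hsq := hstd.normSqAt_adj_sub_up_down_le hAL hcov hlam hl0 hld hlink f
  calc W.normAt l (fun y => W.Adj f y - W.Up (W.Down f) y)
      ≤ Real.sqrt (lam ^ 2 * W.normSqAt l f) := Real.sqrt_le_sqrt hsq
    _ = lam * W.normAt l f := by rw [Real.sqrt_mul (sq_nonneg lam), Real.sqrt_sq hlam, WGP.normAt]
end
end

section
/- Let P be a finite pure weighted graded poset of rank d which is a μ-global eposet with constants (r_j, δ_j)_{1≤j≤d−1}. If for some 1 ≤ j ≤ d−1 one has δ_j ≥ 0 and μ < r_j, then the up operator U_j : C^j → C^{j+1} is injective. -/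
open Finset

attribute [local instance] Classical.propDecidable

noncomputable section

/-!
Write `E f = D U f - δ U D f - r f`. Since `D` is adjoint to `U`, pairing with `f` gives
`‖U f‖² = δ ‖D f‖² + r ‖f‖² + ⟨E f, f⟩`. For `δ ≥ 0` the first term is nonnegative, and
by Cauchy–Schwarz the last one is at least `-μ ‖f‖²` as soon as `‖E f‖ ≤ μ ‖f‖`. Hence
`‖U f‖² ≥ (r - μ) ‖f‖²`, so `U` has no kernel when `μ < r`.
-/

namespace WGP

variable {P : Type} [Fintype P] [PartialOrder P] (W : WGP P)

theorem mem_lvl {i : ℤ} {x : P} : x ∈ W.lvl i ↔ W.rk x = i := by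
  simp only [lvl, mem_filter, mem_univ, true_and]

theorem p_eq_zero_of_rk_ne {x y : P} (h : W.rk y ≠ W.rk x + 1) : W.p y x = 0 := by
  by_contra hp
  have hpos : 0 < W.p y x := (W.p_nonneg y x).lt_of_ne' hp
  exact h (W.rk_covBy x y ((W.p_pos_iff y x).1 hpos))

theorem up_eq_sum_lvl {i : ℤ} {y : P} (hy : W.rk y = i + 1) (f : P → ℝ) :
    W.Up f y = ∑ x ∈ W.lvl i, W.p y x * f x := by
  have hsum : W.Up f y = ∑ x, W.p y x * f x := rfl
  rw [hsum]
  refine (sum_subset (subset_univ _) fun x _ hx => ?_).symm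
  have hrk : W.rk y ≠ W.rk x + 1 := fun h => hx (W.mem_lvl.2 (by lia))
  rw [W.p_eq_zero_of_rk_ne hrk, zero_mul]

theorem m_mul_down_eq_sum_lvl {i : ℤ} {x : P} (hx : W.rk x = i) (g : P → ℝ) :
    W.m x * W.Down g x = ∑ y ∈ W.lvl (i + 1), W.p y x * W.m y * g y := by
  have hm : W.m x ≠ 0 := (W.m_pos x).ne'
  calc W.m x * W.Down g x = W.m x * ∑ y, W.p y x * W.m y / W.m x * g y := rfl
    _ = ∑ y, W.p y x * W.m y * g y := by
      rw [mul_sum]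
      refine sum_congr rfl fun y _ => ?_
      field_simp
    _ = ∑ y ∈ W.lvl (i + 1), W.p y x * W.m y * g y := by
      refine (sum_subset (subset_univ _) fun y _ hy => ?_).symm
      have hrk : W.rk y ≠ W.rk x + 1 := fun h => hy (W.mem_lvl.2 (by lia))
      rw [W.p_eq_zero_of_rk_ne hrk, zero_mul, zero_mul]

theorem innerAt_comm (i : ℤ) (f g : P → ℝ) : W.innerAt i f g = W.innerAt i g f :=
  sum_congr rfl fun _ _ => mul_right_comm _ _ _

theorem innerAt_down_left (i : ℤ) (g f : P → ℝ) :
    W.innerAt i (W.Down g) f = W.innerAt (i + 1) g (W.Up f) :=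
  calc ∑ x ∈ W.lvl i, W.m x * W.Down g x * f x
      = ∑ x ∈ W.lvl i, ∑ y ∈ W.lvl (i + 1), W.p y x * W.m y * g y * f x := by
        refine sum_congr rfl fun x hx => ?_
        rw [W.m_mul_down_eq_sum_lvl (W.mem_lvl.1 hx), sum_mul]
    _ = ∑ y ∈ W.lvl (i + 1), ∑ x ∈ W.lvl i, W.p y x * W.m y * g y * f x := sum_comm
    _ = ∑ y ∈ W.lvl (i + 1), W.m y * g y * W.Up f y := by
        refine sum_congr rfl fun y hy => ?_
        rw [W.up_eq_sum_lvl (W.mem_lvl.1 hy), mul_sum]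
        exact sum_congr rfl fun x _ => by ring

theorem innerAt_up_left (i : ℤ) (g f : P → ℝ) :
    W.innerAt (i + 1) (W.Up g) f = W.innerAt i g (W.Down f) := by
  rw [innerAt_comm, ← innerAt_down_left, innerAt_comm]

theorem m_mul_mul_self_nonneg (x : P) (a : ℝ) : 0 ≤ W.m x * a * a := by
  rw [mul_assoc]
  exact mul_nonneg (W.m_pos x).le (mul_self_nonneg a)

theorem normSqAt_nonneg (i : ℤ) (f : P → ℝ) : 0 ≤ W.normSqAt i f :=
  sum_nonneg fun x _ => W.m_mul_mul_self_nonneg x (f x)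

theorem normAt_nonneg (i : ℤ) (f : P → ℝ) : 0 ≤ W.normAt i f :=
  Real.sqrt_nonneg _

theorem normAt_mul_self (i : ℤ) (f : P → ℝ) : W.normAt i f * W.normAt i f = W.normSqAt i f :=
  Real.mul_self_sqrt (W.normSqAt_nonneg i f)

theorem normSqAt_eq_zero_iff {i : ℤ} {f : P → ℝ} :
    W.normSqAt i f = 0 ↔ ∀ x, W.rk x = i → f x = 0 := by
  rw [normSqAt, innerAt, sum_eq_zero_iff_of_nonneg fun x _ => W.m_mul_mul_self_nonneg x (f x)]
  simp only [W.mem_lvl, mul_eq_zero, (W.m_pos _).ne', false_or, or_self]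

theorem abs_innerAt_le_normAt_mul_normAt (i : ℤ) (f g : P → ℝ) :
    |W.innerAt i f g| ≤ W.normAt i f * W.normAt i g := by
  have hm (x : P) : √(W.m x) * √(W.m x) = W.m x := Real.mul_self_sqrt (W.m_pos x).le
  have hsq (h : P → ℝ) : ∑ x ∈ W.lvl i, (√(W.m x) * h x) ^ 2 = W.normSqAt i h :=
    sum_congr rfl fun x _ => by linear_combination h x * h x * hm x
  have hmul : ∑ x ∈ W.lvl i, √(W.m x) * f x * (√(W.m x) * g x) = W.innerAt i f g :=
    sum_congr rfl fun x _ => by linear_combination f x * g x * hm x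
  have hcs : W.innerAt i f g ^ 2 ≤ W.normSqAt i f * W.normSqAt i g := by
    rw [← hmul, ← hsq f, ← hsq g]
    exact sum_mul_sq_le_sq_mul_sq _ _ _
  calc |W.innerAt i f g| ≤ √(W.normSqAt i f * W.normSqAt i g) := Real.abs_le_sqrt hcs
    _ = W.normAt i f * W.normAt i g := Real.sqrt_mul (W.normSqAt_nonneg i f) _

/-- The operator `D U - δ U D - r Id`, whose norm on `C^j` for `r = r_j`, `δ = δ_j` a `μ`-global
eposet bounds by `μ`. It acts on all of `P → ℝ`, the level being chosen by the norm. -/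
def eposetDefect (r δ : ℝ) (f : P → ℝ) : P → ℝ :=
  fun x => W.Down (W.Up f) x - δ * W.Up (W.Down f) x - r * f x

theorem innerAt_eposetDefect_self (j : ℤ) (r δ : ℝ) (f : P → ℝ) :
    W.innerAt j (W.eposetDefect r δ f) f =
      W.normSqAt (j + 1) (W.Up f) - δ * W.normSqAt (j - 1) (W.Down f) - r * W.normSqAt j f := by
  have hDU : W.innerAt j (W.Down (W.Up f)) f = W.normSqAt (j + 1) (W.Up f) :=
    W.innerAt_down_left j (W.Up f) f
  have hUD : W.innerAt j (W.Up (W.Down f)) f = W.normSqAt (j - 1) (W.Down f) := by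
    simpa only [sub_add_cancel, normSqAt] using W.innerAt_up_left (j - 1) (W.Down f) f
  rw [← hDU, ← hUD]
  simp only [normSqAt, innerAt, eposetDefect, mul_sum, ← sum_sub_distrib]
  exact sum_congr rfl fun x _ => by ring

theorem sub_mul_normSqAt_le_normSqAt_up {j : ℤ} {mu r δ : ℝ} (hδ : 0 ≤ δ) {f : P → ℝ}
    (hf : W.normAt j (W.eposetDefect r δ f) ≤ mu * W.normAt j f) :
    (r - mu) * W.normSqAt j f ≤ W.normSqAt (j + 1) (W.Up f) := by
  have hdefect : -(mu * W.normSqAt j f) ≤ W.innerAt j (W.eposetDefect r δ f) f := by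
    refine neg_le_of_abs_le ?_
    calc |W.innerAt j (W.eposetDefect r δ f) f|
        ≤ W.normAt j (W.eposetDefect r δ f) * W.normAt j f :=
          W.abs_innerAt_le_normAt_mul_normAt j _ f
      _ ≤ mu * W.normAt j f * W.normAt j f :=
          mul_le_mul_of_nonneg_right hf (W.normAt_nonneg j f)
      _ = mu * W.normSqAt j f := by rw [mul_assoc, normAt_mul_self]
  have hdown : 0 ≤ δ * W.normSqAt (j - 1) (W.Down f) :=
    mul_nonneg hδ (W.normSqAt_nonneg _ _)
  linarith only [hdefect, hdown, W.innerAt_eposetDefect_self j r δ f]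

end WGP

/-- in a `μ`-global eposet, if `δ_j ≥ 0` and `μ < r_j` then
`U_j` is injective. -/
theorem stmt14 {P : Type} [Fintype P] [PartialOrder P] (W : WGP P)
    (mu : ℝ) (r δ : ℤ → ℝ)
    (heposet : ∀ j : ℤ, 1 ≤ j → j ≤ W.d - 1 → ∀ f : P → ℝ,
      W.normAt j (fun x => W.Down (W.Up f) x - δ j * W.Up (W.Down f) x - r j * f x)
        ≤ mu * W.normAt j f)
    (j : ℤ) (hj1 : 1 ≤ j) (hj2 : j ≤ W.d - 1) (hδ : 0 ≤ δ j) (hmur : mu < r j) :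
    ∀ f : P → ℝ, (∀ y : P, W.rk y = j + 1 → W.Up f y = 0) →
      ∀ x : P, W.rk x = j → f x = 0 := by
  intro f hf
  have hup : W.normSqAt (j + 1) (W.Up f) = 0 := W.normSqAt_eq_zero_iff.2 hf
  have hbound : (r j - mu) * W.normSqAt j f ≤ 0 :=
    hup ▸ W.sub_mul_normSqAt_le_normSqAt_up hδ (heposet j hj1 hj2 f)
  have hnorm : W.normSqAt j f = 0 :=
    (nonpos_of_mul_nonpos_right hbound (sub_pos.2 hmur)).antisymm (W.normSqAt_nonneg j f)
  exact W.normSqAt_eq_zero_iff.1 hnorm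
end
end
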